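/- arXiv:0906.2450 — 3 statements merged into one kernel-verified Lean document; each statement's English description precedes it below -/
import Mathlib

section
/- For every nonnegative integer n, there exist integers x, y, z, each relatively prime to 6, such that 24n + 6 = x² + 2y² + 3z². -/
theorem aux_shift (A B : ℤ) (hA : 0 < A) : ∃ k : ℤ, -A ≤ 2 * (B + k * A) ∧ 2 * (B + k * A) ≤ A := by
  refine ⟨-((2 * B + A) / (2 * A)), ?_⟩
  have h1 := Int.emod_add_mul_ediv (2 * B + A) (2 * A)
  have h2 := Int.emod_nonneg (2 * B + A) (show 2 * A ≠ 0 by omega)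
  have h3 := Int.emod_lt_of_pos (2 * B + A) (show 0 < 2 * A by omega)
  set q := (2 * B + A) / (2 * A)
  constructor <;> nlinarith

theorem aux_sqle (f a : ℤ) (h1 : -a ≤ 2 * f) (h2 : 2 * f ≤ a) : 4 * f ^ 2 ≤ a ^ 2 := by
  nlinarith

theorem aux_small (a g : ℤ) (ha : 0 < a) (h4 : 3 * a ^ 2 ≤ 4 * g) (h3 : 3 * g ^ 2 ≤ 4 * a) :
    a = 1 := by
  by_contra hne
  have h2a : 2 ≤ a := by omega
  have h5 : 3 * a ≤ 2 * g := by nlinarith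
  nlinarith

/-- Reduction of positive definite binary forms. -/
theorem aux_bin (N : ℕ) : ∀ A B C D : ℤ, A.toNat ≤ N → 0 < A → 0 < D → A * C - B ^ 2 = D →
    ∃ p q r s : ℤ, p * s - q * r = 1 ∧ 0 < A * p ^ 2 + 2 * B * p * r + C * r ^ 2 ∧
      3 * (A * p ^ 2 + 2 * B * p * r + C * r ^ 2) ^ 2 ≤ 4 * D := by
  induction N with
  | zero => intro A B C D h1 h2; omega
  | succ N ih =>
    intro A B C D hN hA hD h
    obtain ⟨k, hk1, hk2⟩ := aux_shift A B hA
    obtain ⟨B', hB⟩ : ∃ B', B' = B + k * A := ⟨_, rfl⟩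
    obtain ⟨C', hC⟩ : ∃ C', C' = C + 2 * k * B + k ^ 2 * A := ⟨_, rfl⟩
    rw [← hB] at hk1 hk2
    have h' : A * C' - B' ^ 2 = D := by subst hB hC; rw [← h]; ring
    have hBA : 4 * B' ^ 2 ≤ A ^ 2 := by nlinarith
    by_cases hc : A ≤ C'
    · refine ⟨1, 0, 0, 1, by ring, by simpa using hA, ?_⟩
      have : A * A ≤ A * C' := mul_le_mul_of_nonneg_left hc hA.le
      have e : A * 1 ^ 2 + 2 * B * 1 * 0 + C * 0 ^ 2 = A := by ring
      rw [e]
      nlinarith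
    · have hC' : 0 < C' := by
        have : 0 < A * C' := by nlinarith [sq_nonneg B']
        exact pos_of_mul_pos_right this hA.le
      obtain ⟨p, q, r, s, h1, h2, h3⟩ := ih C' (-B') A D (by omega) hC' hD (by rw [← h']; ring)
      have e : A * (-r + k * p) ^ 2 + 2 * B * (-r + k * p) * p + C * p ^ 2
          = C' * p ^ 2 + 2 * (-B') * p * r + A * r ^ 2 := by subst hB hC; ring
      refine ⟨-r + k * p, -s + k * q, p, q, by rw [← h1]; ring, ?_, ?_⟩
      · rw [e]; exact h2
      · rw [e]; exact h3

/-- A positive definite ternary form of determinant one only represents sums of three squares. -/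
theorem aux_tern (N : ℕ) : ∀ a b c d e f : ℤ, a.toNat ≤ N → 0 < a → 0 < a * b - f ^ 2 →
    a * b * c + 2 * d * e * f - a * d ^ 2 - b * e ^ 2 - c * f ^ 2 = 1 →
    ∀ x y z : ℤ, ∃ u v w : ℤ,
      a * x ^ 2 + b * y ^ 2 + c * z ^ 2 + 2 * d * y * z + 2 * e * x * z + 2 * f * x * y
        = u ^ 2 + v ^ 2 + w ^ 2 := by
  induction N with
  | zero => intro a b c d e f h1 h2; omega
  | succ N ih =>
    intro a b c d e f hN ha hg hdet x y z
    obtain ⟨p, q, r, s, h1, h2, h3⟩ := aux_bin _ (a * b - f ^ 2) (a * d - e * f) (a * c - e ^ 2) a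
      le_rfl hg ha (by linear_combination a * hdet)
    -- new coefficients after the change of (y, z)
    obtain ⟨b1, hb1⟩ : ∃ t, t = b * p ^ 2 + 2 * d * p * r + c * r ^ 2 := ⟨_, rfl⟩
    obtain ⟨c1, hc1⟩ : ∃ t, t = b * q ^ 2 + 2 * d * q * s + c * s ^ 2 := ⟨_, rfl⟩
    obtain ⟨d1, hd1⟩ : ∃ t, t = b * p * q + d * (p * s + q * r) + c * r * s := ⟨_, rfl⟩
    obtain ⟨e1, he1⟩ : ∃ t, t = f * q + e * s := ⟨_, rfl⟩
    obtain ⟨f1, hf1⟩ : ∃ t, t = f * p + e * r := ⟨_, rfl⟩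
    have eg : (a * b - f ^ 2) * p ^ 2 + 2 * (a * d - e * f) * p * r + (a * c - e ^ 2) * r ^ 2
        = a * b1 - f1 ^ 2 := by subst hb1 hf1; ring
    rw [eg] at h2 h3
    have hdet1 : a * b1 * c1 + 2 * d1 * e1 * f1 - a * d1 ^ 2 - b1 * e1 ^ 2 - c1 * f1 ^ 2 = 1 := by
      have : a * b1 * c1 + 2 * d1 * e1 * f1 - a * d1 ^ 2 - b1 * e1 ^ 2 - c1 * f1 ^ 2
        = (a * b * c + 2 * d * e * f - a * d ^ 2 - b * e ^ 2 - c * f ^ 2) * (p * s - q * r) ^ 2 := by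
        subst hb1 hc1 hd1 he1 hf1; ring
      rw [this, h1, hdet]; norm_num
    obtain ⟨k, hk1, hk2⟩ := aux_shift a f1 ha
    -- shift x -> x + k y
    obtain ⟨b2, hb2⟩ : ∃ t, t = b1 + 2 * k * f1 + k ^ 2 * a := ⟨_, rfl⟩
    obtain ⟨d2, hd2⟩ : ∃ t, t = d1 + k * e1 := ⟨_, rfl⟩
    obtain ⟨f2, hf2⟩ : ∃ t, t = f1 + k * a := ⟨_, rfl⟩
    rw [← hf2] at hk1 hk2
    have eg2 : a * b1 - f1 ^ 2 = a * b2 - f2 ^ 2 := by subst hb2 hf2; ring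
    rw [eg2] at h2 h3
    have hdet2 : a * b2 * c1 + 2 * d2 * e1 * f2 - a * d2 ^ 2 - b2 * e1 ^ 2 - c1 * f2 ^ 2 = 1 := by
      rw [← hdet1]; subst hb2 hd2 hf2; ring
    -- new variables
    obtain ⟨Y, hY⟩ : ∃ t, t = s * y - q * z := ⟨_, rfl⟩
    obtain ⟨Z, hZ⟩ : ∃ t, t = -r * y + p * z := ⟨_, rfl⟩
    obtain ⟨X, hX⟩ : ∃ t, t = x - k * Y := ⟨_, rfl⟩
    have hy : y = p * Y + q * Z := by subst hY hZ; linear_combination -y * h1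
    have hz : z = r * Y + s * Z := by subst hY hZ; linear_combination -z * h1
    have hx : x = X + k * Y := by rw [hX]; ring
    have key : a * x ^ 2 + b * y ^ 2 + c * z ^ 2 + 2 * d * y * z + 2 * e * x * z + 2 * f * x * y
        = a * X ^ 2 + b2 * Y ^ 2 + c1 * Z ^ 2 + 2 * d2 * Y * Z + 2 * e1 * X * Z + 2 * f2 * X * Y := by
      rw [hx, hy, hz, hb2, hd2, hf2, hb1, hc1, hd1, he1, hf1]; ring
    rw [key]
    have hfa : 4 * f2 ^ 2 ≤ a ^ 2 := aux_sqle _ _ hk1 hk2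
    clear hX hY hZ hx hy hz key
    by_cases hab : a ≤ b2
    · have hm : a * a ≤ a * b2 := mul_le_mul_of_nonneg_left hab ha.le
      obtain ⟨g, hgd⟩ : ∃ g, g = a * b2 - f2 ^ 2 := ⟨_, rfl⟩
      rw [← hgd] at h2 h3
      have h4 : 3 * a ^ 2 ≤ 4 * g := by rw [hgd]; linarith [sq a]
      have ha1 : a = 1 := aux_small a g ha h4 h3
      subst ha1
      have hg1 : g = 1 := by
        by_contra hne
        have h6 : 2 ≤ g := by omega
        have h7 : 2 * 2 ≤ g * g := mul_le_mul h6 h6 (by norm_num) (by omega)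
        linarith [sq g]
      have hb : b2 = 1 + f2 ^ 2 := by linarith
      have hc : c1 = e1 ^ 2 + (d2 - e1 * f2) ^ 2 + 1 := by
        rw [hb] at hdet2; linear_combination hdet2
      refine ⟨X + f2 * Y + e1 * Z, Y + (d2 - e1 * f2) * Z, Z, ?_⟩
      rw [hb, hc]; ring
    · have hbpos : 0 < b2 := by
        have : 0 < a * b2 := by linarith [sq_nonneg f2]
        exact pos_of_mul_pos_right this ha.le
      obtain ⟨u, v, w, h⟩ := ih b2 a c1 e1 d2 f2 (by omega) hbpos (by linarith)
        (by rw [← hdet2]; ring) Y X Z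
      exact ⟨u, v, w, by rw [← h]; ring⟩

theorem aux_jacobi (p b m : ℕ) (hp : p.Prime) (hpo : p % 2 = 1) (hb : b % 8 = 3)
    (h : 2 * p + 1 = b * m) : IsSquare (((-(b : ℤ)) : ℤ) : ZMod p) := by
  have : Fact p.Prime := ⟨hp⟩
  apply ZMod.isSquare_of_jacobiSym_eq_one
  have hbo : Odd b := Nat.odd_iff.2 (by omega)
  have hpo' : Odd p := Nat.odd_iff.2 hpo
  have e1 : jacobiSym (-2) b = 1 := by
    rw [jacobiSym.at_neg_two hbo, ZMod.χ₈'_nat_eq_if_mod_eight]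
    rw [if_neg (by omega), if_pos (Or.inr hb)]
  have e2 : jacobiSym ((-2) * (p : ℤ)) b = 1 := by
    rw [← jacobiSym.one_left b]
    apply jacobiSym.mod_left'
    have hz : 2 * (p : ℤ) + 1 = b * m := by exact_mod_cast h
    have : (-2) * (p : ℤ) = 1 + b * (-m) := by linear_combination -hz
    rw [this, Int.add_mul_emod_self_left]
  have e3 : jacobiSym (p : ℤ) b = 1 := by
    rw [jacobiSym.mul_left, e1, one_mul] at e2; exact e2
  rw [jacobiSym.neg _ hpo']
  rcases Nat.odd_mod_four_iff.mp hpo with h4 | h4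
  · rw [ZMod.χ₄_nat_one_mod_four h4, jacobiSym.quadratic_reciprocity_one_mod_four' hbo h4, e3]
    norm_num
  · rw [ZMod.χ₄_nat_three_mod_four h4,
      jacobiSym.quadratic_reciprocity_three_mod_four (by omega) h4, e3]
    norm_num

theorem aux_three (n : ℕ) : ∃ a b c : ℤ, 4 * (n : ℤ) + 1 = a ^ 2 + b ^ 2 + c ^ 2 := by
  obtain ⟨m, hm⟩ : ∃ m, m = 4 * n + 1 := ⟨_, rfl⟩
  have hco : Nat.Coprime (6 * n + 1) (4 * m) := by
    apply Nat.Coprime.mul_right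
    · have : Nat.Coprime (6 * n + 1) 2 := by
        rw [Nat.coprime_two_right, Nat.odd_iff]; omega
      exact this.pow_right 2
    · rw [← Nat.isCoprime_iff_coprime]
      refine ⟨-2, 3, ?_⟩
      rw [hm]; push_cast; ring
  obtain ⟨p, hgt, hp, hmod⟩ := Nat.forall_exists_prime_gt_and_modEq (6 * n + 1)
    (show 4 * m ≠ 0 by omega) hco
  obtain ⟨v, hv⟩ := (Nat.modEq_iff_dvd' hgt.le).1 hmod.symm
  have hpv : p = 4 * m * v + (6 * n + 1) := by omega
  have hpo : p % 2 = 1 := by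
    have : 4 * m * v = 2 * (2 * m * v) := by ring
    omega
  obtain ⟨b, hb⟩ : ∃ b, b = 8 * v + 3 := ⟨_, rfl⟩
  have hbm : 2 * p + 1 = b * m := by rw [hpv, hb, hm]; ring
  obtain ⟨t0, ht0⟩ := aux_jacobi p b m hp hpo (by omega) hbm
  have : Fact p.Prime := ⟨hp⟩
  obtain ⟨t1, rfl⟩ := ZMod.intCast_surjective t0
  have hd1 : (p : ℤ) ∣ t1 ^ 2 + b := by
    rw [← ZMod.intCast_zmod_eq_zero_iff_dvd]
    push_cast at ht0 ⊢
    linear_combination -ht0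
  obtain ⟨t, hto, htd⟩ : ∃ t : ℤ, t % 2 = 1 ∧ (p : ℤ) ∣ t ^ 2 + b := by
    rcases Int.emod_two_eq_zero_or_one t1 with h | h
    · refine ⟨t1 + p, by omega, ?_⟩
      have : (t1 + p) ^ 2 + b = (t1 ^ 2 + b) + p * (2 * t1 + p) := by ring
      rw [this]
      exact dvd_add hd1 (dvd_mul_right _ _)
    · exact ⟨t1, h, hd1⟩
  have h2d : (2 : ℤ) ∣ t ^ 2 + b := by
    have : t ^ 2 % 2 = 1 := by rw [pow_two, Int.mul_emod, hto]; rfl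
    omega
  have hdvd : (2 * p : ℤ) ∣ t ^ 2 + b := by
    refine IsCoprime.mul_dvd ?_ h2d htd
    refine ⟨-((p : ℤ) / 2), 1, by omega⟩
  obtain ⟨a, ha⟩ := hdvd
  have hppos : (0 : ℤ) < p := by exact_mod_cast hp.pos
  have hbpos : (0 : ℤ) < b := by omega
  have hapos : 0 < a := by
    have : 0 < (2 * p : ℤ) * a := by rw [← ha]; positivity
    exact pos_of_mul_pos_right this (by positivity)
  have hbmz : 2 * (p : ℤ) + 1 = b * m := by exact_mod_cast hbm
  obtain ⟨u, w, x, h⟩ := aux_tern _ a (2 * p) m 0 1 t le_rfl hapos (by linarith)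
    (by linear_combination -hbmz - (m : ℤ) * ha) 0 0 1
  refine ⟨u, w, x, ?_⟩
  rw [← h, hm]; push_cast; ring

theorem aux_nd3 (N : ℕ) : ∀ a b c : ℤ, (a ^ 2 + b ^ 2 + c ^ 2).toNat ≤ N → 0 < a ^ 2 + b ^ 2 + c ^ 2 →
    ∃ x y z : ℤ, x ^ 2 + y ^ 2 + z ^ 2 = a ^ 2 + b ^ 2 + c ^ 2 ∧ ¬ (3 ∣ x ∧ 3 ∣ y ∧ 3 ∣ z) := by
  induction N with
  | zero => intro a b c h1 h2; omega
  | succ N ih =>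
    intro a b c hN hpos
    by_cases hd : 3 ∣ a ∧ 3 ∣ b ∧ 3 ∣ c
    · obtain ⟨⟨a, rfl⟩, ⟨b, rfl⟩, ⟨c, rfl⟩⟩ := hd
      have e : (3 * a) ^ 2 + (3 * b) ^ 2 + (3 * c) ^ 2 = 9 * (a ^ 2 + b ^ 2 + c ^ 2) := by ring
      rw [e] at hN hpos ⊢
      obtain ⟨x, y, z, h1, h2⟩ := ih a b c (by omega) (by omega)
      rw [← h1]
      have key : ∀ y' z' : ℤ, y' ^ 2 = y ^ 2 → z' ^ 2 = z ^ 2 → ¬ 3 ∣ x + y' + z' →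
          ∃ X Y Z : ℤ, X ^ 2 + Y ^ 2 + Z ^ 2 = 9 * (x ^ 2 + y ^ 2 + z ^ 2) ∧
            ¬ (3 ∣ X ∧ 3 ∣ Y ∧ 3 ∣ Z) := by
        intro y' z' hy hz hs
        refine ⟨3 * x - 2 * (x + y' + z'), 3 * y' - 2 * (x + y' + z'),
          3 * z' - 2 * (x + y' + z'), ?_, ?_⟩
        · rw [← hy, ← hz]; ring
        · omega
      by_cases c1 : 3 ∣ x + y + z
      · by_cases c2 : 3 ∣ x + -y + z
        · by_cases c3 : 3 ∣ x + y + -z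
          · by_cases c4 : 3 ∣ x + -y + -z
            · omega
            · exact key (-y) (-z) (by ring) (by ring) c4
          · exact key y (-z) rfl (by ring) c3
        · exact key (-y) z (by ring) rfl c2
      · exact key y z rfl rfl c1
    · exact ⟨a, b, c, rfl, hd⟩

theorem aux_two (N : ℕ) : ∀ a b : ℤ, (a ^ 2 + 2 * b ^ 2).toNat ≤ N → 0 < a ^ 2 + 2 * b ^ 2 →
    ∃ x y : ℤ, x ^ 2 + 2 * y ^ 2 = a ^ 2 + 2 * b ^ 2 ∧ ¬ (3 ∣ x ∧ 3 ∣ y) := by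
  induction N with
  | zero => intro a b h1 h2; omega
  | succ N ih =>
    intro a b hN hpos
    by_cases hd : 3 ∣ a ∧ 3 ∣ b
    · obtain ⟨⟨a, rfl⟩, ⟨b, rfl⟩⟩ := hd
      have e : (3 * a) ^ 2 + 2 * (3 * b) ^ 2 = 9 * (a ^ 2 + 2 * b ^ 2) := by ring
      rw [e] at hN hpos ⊢
      obtain ⟨x, y, h1, h2⟩ := ih a b (by omega) (by omega)
      rw [← h1]
      by_cases c1 : 3 ∣ x + y
      · exact ⟨x - 4 * y, 2 * x + y, by ring, by omega⟩
      · exact ⟨x + 4 * y, 2 * x - y, by ring, by omega⟩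
    · exact ⟨a, b, rfl, hd⟩

theorem aux_gcd (x : ℤ) (h2 : x % 2 = 1) (h3 : ¬ 3 ∣ x) : Int.gcd x 6 = 1 := by
  rw [← Int.isCoprime_iff_gcd_eq_one]
  have a2 : IsCoprime x 2 := ⟨1, -(x / 2), by omega⟩
  have a3 : IsCoprime x 3 := by
    rcases (show x % 3 = 1 ∨ x % 3 = 2 by omega) with h | h
    · exact ⟨1, -(x / 3), by omega⟩
    · exact ⟨-1, x / 3 + 1, by omega⟩
  exact a2.mul_right a3

theorem aux_sq8 (x : ℤ) : (x % 2 = 1 ∧ x ^ 2 % 8 = 1) ∨ (x % 2 = 0 ∧ (x ^ 2 % 8 = 0 ∨ x ^ 2 % 8 = 4)) := by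
  rcases (show x % 8 = 0 ∨ x % 8 = 1 ∨ x % 8 = 2 ∨ x % 8 = 3 ∨ x % 8 = 4 ∨ x % 8 = 5 ∨ x % 8 = 6 ∨
    x % 8 = 7 by omega) with h | h | h | h | h | h | h | h <;>
  · have : x ^ 2 % 8 = ((x % 8) * (x % 8)) % 8 := by rw [pow_two, Int.mul_emod]
    rw [h] at this
    omega

theorem aux_sq3 (x : ℤ) : (3 ∣ x ∧ x ^ 2 % 3 = 0) ∨ (¬ 3 ∣ x ∧ x ^ 2 % 3 = 1) := by
  rcases (show x % 3 = 0 ∨ x % 3 = 1 ∨ x % 3 = 2 by omega) with h | h | h <;>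
  · have : x ^ 2 % 3 = ((x % 3) * (x % 3)) % 3 := by rw [pow_two, Int.mul_emod]
    rw [h] at this
    omega

theorem aux_final (n : ℕ) (p q v : ℤ) (h : p ^ 2 + q ^ 2 + v ^ 2 = 4 * (n : ℤ) + 1)
    (hv : v % 2 = 0) (hpq : ¬ 3 ∣ p + q) :
    ∃ x y z : ℤ, Int.gcd x 6 = 1 ∧ Int.gcd y 6 = 1 ∧ Int.gcd z 6 = 1 ∧
      24 * (n : ℤ) + 6 = x ^ 2 + 2 * y ^ 2 + 3 * z ^ 2 := by
  have hz : (p + q) % 2 = 1 := by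
    have := aux_sq8 p
    have := aux_sq8 q
    have := aux_sq8 v
    omega
  have e : (p - q - 2 * v) ^ 2 + 2 * (p - q + v) ^ 2 = 3 * ((p - q) ^ 2 + 2 * v ^ 2) := by ring
  have hpos : 0 < 3 * ((p - q) ^ 2 + 2 * v ^ 2) := by
    have : p - q ≠ 0 := by omega
    positivity
  obtain ⟨x, y, h1, h2⟩ := aux_two _ (p - q - 2 * v) (p - q + v) le_rfl (by rw [e]; exact hpos)
  rw [e] at h1
  have hfin : 24 * (n : ℤ) + 6 = x ^ 2 + 2 * y ^ 2 + 3 * (p + q) ^ 2 := by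
    rw [h1]; linear_combination -6 * h
  have z8 := aux_sq8 (p + q)
  have x8 := aux_sq8 x
  have y8 := aux_sq8 y
  have x3 := aux_sq3 x
  have y3 := aux_sq3 y
  exact ⟨x, y, p + q, aux_gcd _ (by omega) (by omega), aux_gcd _ (by omega) (by omega),
    aux_gcd _ hz hpq, hfin⟩

theorem aux_final' (n : ℕ) (p q v : ℤ) (h : p ^ 2 + q ^ 2 + v ^ 2 = 4 * (n : ℤ) + 1)
    (hv : v % 2 = 0) (hpq : ¬ (3 ∣ p ∧ 3 ∣ q)) :
    ∃ x y z : ℤ, Int.gcd x 6 = 1 ∧ Int.gcd y 6 = 1 ∧ Int.gcd z 6 = 1 ∧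
      24 * (n : ℤ) + 6 = x ^ 2 + 2 * y ^ 2 + 3 * z ^ 2 := by
  by_cases c : 3 ∣ p + q
  · exact aux_final n p (-q) v (by rw [← h]; ring) hv (by omega)
  · exact aux_final n p q v h hv c

theorem rep_24n_add_six (n : ℕ) :
    ∃ x y z : ℤ, Int.gcd x 6 = 1 ∧ Int.gcd y 6 = 1 ∧ Int.gcd z 6 = 1 ∧
      24 * (n : ℤ) + 6 = x ^ 2 + 2 * y ^ 2 + 3 * z ^ 2 := by
  obtain ⟨a0, b0, c0, h0⟩ := aux_three n
  obtain ⟨a, b, c, h, hd⟩ := aux_nd3 _ a0 b0 c0 le_rfl (by omega)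
  rw [← h0] at h
  have a8 := aux_sq8 a
  have b8 := aux_sq8 b
  have c8 := aux_sq8 c
  by_cases ha : a % 2 = 0 ∧ ¬ (3 ∣ b ∧ 3 ∣ c)
  · exact aux_final' n b c a (by rw [← h]; ring) ha.1 ha.2
  by_cases hb : b % 2 = 0 ∧ ¬ (3 ∣ a ∧ 3 ∣ c)
  · exact aux_final' n a c b (by rw [← h]; ring) hb.1 hb.2
  by_cases hc : c % 2 = 0 ∧ ¬ (3 ∣ a ∧ 3 ∣ b)
  · exact aux_final' n a b c (by rw [← h]) hc.1 hc.2
  exfalso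
  omega
end

section
/- For every nonnegative integer n, there exist integers x, y, z, each relatively prime to 6, such that 24n + 7 = x² + 3y² + 3z². -/
/-- A positive definite integral ternary form of half-discriminant 3, representing `N`. -/
def TRep (N a b c d e f : ℤ) : Prop :=
  0 < a ∧ 0 < 4 * a * b - f ^ 2 ∧
  4 * a * b * c + d * e * f - a * d ^ 2 - b * e ^ 2 - c * f ^ 2 = 3 ∧
  ∃ x y z : ℤ, a * x ^ 2 + b * y ^ 2 + c * z ^ 2 + d * y * z + e * x * z + f * x * y = N

theorem TRep.swapxy {N a b c d e f : ℤ} (h : TRep N a b c d e f) : TRep N b a c e d f := by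
  obtain ⟨h1, h2, h3, x, y, z, h4⟩ := h
  refine ⟨?_, by linarith, by linarith, y, x, z, by linarith⟩
  by_contra hb
  nlinarith [sq_nonneg f]

theorem TRep.disc {N a b c d e f : ℤ} (h : TRep N a b c d e f) :
    (4 * a * b - f ^ 2) * (4 * a * c - e ^ 2) - (2 * a * d - e * f) ^ 2 = 12 * a := by
  obtain ⟨h1, h2, h3, x, y, z, h4⟩ := h
  linear_combination 4 * a * h3

theorem TRep.swapyz {N a b c d e f : ℤ} (h : TRep N a b c d e f) : TRep N a c b d f e := by
  have hd := h.disc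
  obtain ⟨h1, h2, h3, x, y, z, h4⟩ := h
  refine ⟨h1, ?_, by linarith, x, z, y, by linarith⟩
  by_contra hb
  nlinarith [sq_nonneg (2 * a * d - e * f)]

theorem TRep.trxy {N a b c d e f : ℤ} (h : TRep N a b c d e f) (t : ℤ) :
    TRep N a (b + f * t + a * t ^ 2) c (d + e * t) e (f + 2 * a * t) := by
  obtain ⟨h1, h2, h3, x, y, z, h4⟩ := h
  exact ⟨h1, by linarith, by linear_combination h3, x - t * y, y, z, by linear_combination h4⟩

theorem TRep.trxz {N a b c d e f : ℤ} (h : TRep N a b c d e f) (t : ℤ) :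
    TRep N a b (c + e * t + a * t ^ 2) (d + f * t) (e + 2 * a * t) f := by
  obtain ⟨h1, h2, h3, x, y, z, h4⟩ := h
  exact ⟨h1, by linarith, by linear_combination h3, x - t * z, y, z, by linear_combination h4⟩

theorem TRep.tryz {N a b c d e f : ℤ} (h : TRep N a b c d e f) (t : ℤ) :
    TRep N a b (c + d * t + b * t ^ 2) (d + 2 * b * t) (e + f * t) f := by
  obtain ⟨h1, h2, h3, x, y, z, h4⟩ := h
  exact ⟨h1, by linarith, by linear_combination h3, x, y - t * z, z, by linear_combination h4⟩

theorem exists_round (r M : ℤ) (hM : 0 < M) :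
    ∃ t : ℤ, -M ≤ 2 * (r + M * t) ∧ 2 * (r + M * t) ≤ M := by
  refine ⟨-((2 * r + M) / (2 * M)), ?_⟩
  have h1 := Int.emod_add_mul_ediv (2 * r + M) (2 * M)
  have h2 := Int.emod_nonneg (2 * r + M) (b := 2 * M) (by omega)
  have h3 := Int.emod_lt_of_pos (2 * r + M) (b := 2 * M) (by omega)
  constructor <;> linarith

/-- Normalisation keeping `a` and `4ab - f²`. -/
theorem TRep.normalize {N a b c d e f : ℤ} (h : TRep N a b c d e f) :
    ∃ b' c' d' e' f' : ℤ, TRep N a b' c' d' e' f' ∧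
      4 * a * b' - f' ^ 2 = 4 * a * b - f ^ 2 ∧ -a ≤ f' ∧ f' ≤ a ∧ -a ≤ e' ∧ e' ≤ a ∧
      -(4 * a * b' - f' ^ 2) ≤ 2 * (2 * a * d' - e' * f') ∧
      2 * (2 * a * d' - e' * f') ≤ 4 * a * b' - f' ^ 2 := by
  have ha := h.1
  obtain ⟨t, ht1, ht2⟩ := exists_round (2 * a * d - e * f) (4 * a * b - f ^ 2) h.2.1
  have h1 := h.tryz t
  obtain ⟨s, hs1, hs2⟩ := exists_round f (2 * a) (by omega)
  have h2 := h1.trxy s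
  obtain ⟨r, hr1, hr2⟩ := exists_round (e + f * t) (2 * a) (by omega)
  have h3 := h2.trxz r
  refine ⟨_, _, _, _, _, h3, by ring, ?_, ?_, ?_, ?_, ?_, ?_⟩ <;> nlinarith

theorem TRep.final {N a b c d e f : ℤ} (h : TRep N a b c d e f)
    (hf1 : -a ≤ f) (hf2 : f ≤ a) (he1 : -a ≤ e) (he2 : e ≤ a)
    (hb1 : -(4 * a * b - f ^ 2) ≤ 2 * (2 * a * d - e * f))
    (hb2 : 2 * (2 * a * d - e * f) ≤ 4 * a * b - f ^ 2)
    (hab : a ≤ b) (hal : 4 * a * b - f ^ 2 ≤ 4 * a * c - e ^ 2) :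
    ∃ u v w : ℤ, u ^ 2 + u * v + v ^ 2 + w ^ 2 = N := by
  have hd := h.disc
  obtain ⟨h1, h2, h3, x, y, z, h4⟩ := h
  have hα : 3 * a ^ 2 ≤ 4 * a * b - f ^ 2 := by nlinarith
  have hα2 : (4 * a * b - f ^ 2) ^ 2 ≤ 16 * a := by nlinarith
  have ha : a = 1 := by
    have h9 : (3 * a ^ 2) ^ 2 ≤ 16 * a := by nlinarith [sq_nonneg a]
    by_contra hne
    have : 2 ≤ a := by omega
    have : 8 ≤ a ^ 3 := by nlinarith [sq_nonneg a]
    nlinarith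
  subst ha
  have hα4 : 4 * 1 * b - f ^ 2 ≤ 4 := by nlinarith
  have hb : b = 1 := by
    have : f ^ 2 ≤ 1 := by nlinarith
    omega
  subst hb
  have hf : f = -1 ∨ f = 0 ∨ f = 1 := by omega
  have he : e = -1 ∨ e = 0 ∨ e = 1 := by omega
  have hdd : d = -1 ∨ d = 0 ∨ d = 1 := by
    rcases hf with rfl | rfl | rfl <;> rcases he with rfl | rfl | rfl <;> omega
  rcases hf with rfl | rfl | rfl <;> rcases he with rfl | rfl | rfl <;>
    rcases hdd with rfl | rfl | rfl <;> first
    | (exfalso; omega)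
    | (obtain rfl : c = 1 := by omega
       first
       | exact ⟨x, y, z, by linear_combination h4⟩
       | exact ⟨x, -y, z, by linear_combination h4⟩
       | exact ⟨x, z, y, by linear_combination h4⟩
       | exact ⟨x, -z, y, by linear_combination h4⟩
       | exact ⟨y, z, x, by linear_combination h4⟩
       | exact ⟨y, -z, x, by linear_combination h4⟩)

theorem TRep.main (A : ℕ) : ∀ (B : ℕ) (N a b c d e f : ℤ), TRep N a b c d e f →
    a.toNat = A → (4 * a * b - f ^ 2).toNat = B →
    ∃ u v w : ℤ, u ^ 2 + u * v + v ^ 2 + w ^ 2 = N := by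
  induction A using Nat.strong_induction_on with
  | _ A ihA =>
  intro B
  induction B using Nat.strong_induction_on with
  | _ B ihB =>
  intro N a b c d e f h hA hB
  obtain ⟨b', c', d', e', f', h', heq, k1, k2, k3, k4, k5, k6⟩ := h.normalize
  have hpos := h'.1
  have hposα := h'.2.1
  by_cases hab : a ≤ b'
  · by_cases hal : 4 * a * b' - f' ^ 2 ≤ 4 * a * c' - e' ^ 2
    · exact h'.final k1 k2 k3 k4 k5 k6 hab hal
    · exact ihB _ (by omega) _ _ _ _ _ _ _ h'.swapyz hA rfl
  · exact ihA _ (by have := h'.swapxy.1; omega) _ _ _ _ _ _ _ _ h'.swapxy rfl rfl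

open scoped NumberTheorySymbols in
theorem exists_data (n : ℕ) : ∃ p k A b : ℤ, 0 < p ∧ 0 < k ∧
    3 * p + 1 = 4 * (24 * n + 7) * k ∧ b ^ 2 + k = A * p := by
  obtain ⟨p, hpn, hp, hmod⟩ := Nat.forall_exists_prime_gt_and_modEq 5
    (q := 4 * (24 * n + 7)) (a := 32 * n + 9) (by omega) (by
      have : 4 * (24 * n + 7) = 1 + 3 * (32 * n + 9) := by ring
      rw [this]; simp)
  have hdvd : 4 * (24 * n + 7) ∣ 3 * p + 1 := by
    have h1 := (hmod.mul_left 3).add_right 1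
    have h2 : 3 * (32 * n + 9) + 1 = 4 * (24 * n + 7) := by ring
    rw [h2] at h1
    exact (Nat.modEq_zero_iff_dvd.mp (h1.trans (by simp [Nat.ModEq])))
  obtain ⟨k, hk⟩ := hdvd
  have : Fact p.Prime := ⟨hp⟩
  set m := 24 * n + 7 with hm
  have hk0 : 0 < k := by
    rcases Nat.eq_zero_or_pos k with h | h
    · subst h; omega
    · exact h
  have hp4 : p % 4 = 1 := by
    rw [mul_assoc] at hk; omega
  have hpo : Odd p := Nat.odd_iff.mpr (by omega)
  have hmo : Odd m := Nat.odd_iff.mpr (by omega)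
  have hm4 : m % 4 = 3 := by omega
  have j3 : J((3 : ℕ) | m) = -1 := by
    rw [jacobiSym.quadratic_reciprocity_three_mod_four (by norm_num) hm4,
      jacobiSym.mod_left, show ((m : ℤ) % (3 : ℕ)) = 1 by omega, jacobiSym.one_left]
  have j3p : J((3 : ℕ) | m) * J(p | m) = -1 := by
    rw [← jacobiSym.mul_left, jacobiSym.mod_left' (a₂ := -1), jacobiSym.at_neg_one hmo,
      ZMod.χ₄_nat_three_mod_four hm4]
    apply Int.ModEq.symm
    rw [Int.modEq_iff_dvd]
    exact ⟨4 * k, by push_cast; zify at hk; linarith⟩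
  have jpm : J(p | m) = 1 := by rw [j3] at j3p; linarith
  have jmp : J(m | p) = 1 := by
    rw [jacobiSym.quadratic_reciprocity_one_mod_four' hmo hp4, jpm]
  have jk : J(4 | p) * J(m | p) * J(k | p) = 1 := by
    rw [← jacobiSym.mul_left, ← jacobiSym.mul_left, jacobiSym.mod_left' (a₂ := 1),
      jacobiSym.one_left]
    apply Int.ModEq.symm
    rw [Int.modEq_iff_dvd]
    exact ⟨3, by zify at hk; linarith⟩
  rw [jacobiSym.at_four hpo, jmp] at jk
  have jnk : legendreSym p (-(k : ℤ)) = 1 := by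
    rw [jacobiSym.legendreSym.to_jacobiSym, jacobiSym.neg _ hpo, ZMod.χ₄_nat_one_mod_four hp4]
    linarith
  have hne : ((-(k : ℤ) : ℤ) : ZMod p) ≠ 0 := by
    intro h0
    rw [(legendreSym.eq_zero_iff p _).mpr h0] at jnk
    norm_num at jnk
  obtain ⟨r, hr⟩ := (legendreSym.eq_one_iff p hne).mp jnk
  obtain ⟨b, rfl⟩ := ZMod.intCast_surjective r
  have hd : (p : ℤ) ∣ b ^ 2 + k := by
    rw [← ZMod.intCast_zmod_eq_zero_iff_dvd]
    push_cast at hr ⊢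
    linear_combination -hr
  obtain ⟨A, hA⟩ := hd
  refine ⟨p, k, A, b, by omega, by omega, ?_, by rw [hA]; ring⟩
  zify at hk
  rw [hm] at hk
  push_cast at hk
  exact hk

theorem rep_three (n : ℕ) : ∃ u v w : ℤ,
    u ^ 2 + u * v + v ^ 2 + w ^ 2 = 3 * (24 * n + 7) := by
  obtain ⟨p, k, A, b, hp, hk, h1, h2⟩ := exists_data n
  have hA : 0 < A := by
    by_contra h
    nlinarith [sq_nonneg b]
  refine TRep.main _ _ _ A p (3 * (24 * n + 7)) 0 3 (2 * b) ⟨hA, by nlinarith, ?_, 0, 0, 1, by ring⟩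
    rfl rfl
  linear_combination (-12 * (24 * (n : ℤ) + 7)) * h2 - 3 * h1

theorem hex_to_diag (u v : ℤ) : ∃ x y : ℤ, u ^ 2 + u * v + v ^ 2 = x ^ 2 + 3 * y ^ 2 := by
  rcases Int.even_or_odd' v with ⟨s, rfl | rfl⟩
  · exact ⟨u + s, s, by ring⟩
  · rcases Int.even_or_odd' u with ⟨r, rfl | rfl⟩
    · exact ⟨2 * s + 1 + r, r, by ring⟩
    · exact ⟨r - s, r + s + 1, by ring⟩

theorem rep_diag (n : ℕ) : ∃ x y z : ℤ,
    24 * (n : ℤ) + 7 = x ^ 2 + 3 * y ^ 2 + 3 * z ^ 2 := by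
  obtain ⟨u, v, w, h⟩ := rep_three n
  have h0 : ((u - v) ^ 2 + w ^ 2) % 3 = 0 := by
    have : (u - v) ^ 2 + w ^ 2 = 3 * (24 * n + 7 - u * v) := by linear_combination h
    omega
  have h1 : (u - v) % 3 = 0 ∧ w % 3 = 0 := by
    have a1 : (u - v) % 3 = 0 ∨ (u - v) % 3 = 1 ∨ (u - v) % 3 = 2 := by omega
    have a2 : w % 3 = 0 ∨ w % 3 = 1 ∨ w % 3 = 2 := by omega
    rcases a1 with a1 | a1 | a1 <;> rcases a2 with a2 | a2 | a2 <;>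
      simp [Int.add_emod, pow_two, Int.mul_emod, a1, a2] at h0 ⊢
  obtain ⟨s, hs⟩ := Int.dvd_of_emod_eq_zero h1.1
  obtain ⟨t, rfl⟩ := Int.dvd_of_emod_eq_zero h1.2
  obtain rfl : u = v + 3 * s := by omega
  obtain ⟨x, y, hxy⟩ := hex_to_diag (v + s) s
  exact ⟨x, y, t, by linarith⟩

theorem pair_odd (r s : ℤ) (h : (r + s) % 2 = 1) : ∃ x y : ℤ, x % 2 = 1 ∧ y % 2 = 1 ∧
    (2 * r) ^ 2 + 3 * (2 * s) ^ 2 = x ^ 2 + 3 * y ^ 2 :=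
  ⟨r + 3 * s, r - s, by omega, by omega, by ring⟩

theorem pair_fix (x y : ℤ) (hx : x % 2 = 1) (hy : y % 2 = 1) (hx3 : x % 3 ≠ 0) :
    ∃ x' y' : ℤ, x' % 2 = 1 ∧ y' % 2 = 1 ∧ x' % 3 ≠ 0 ∧ y' % 3 ≠ 0 ∧
      x ^ 2 + 3 * y ^ 2 = x' ^ 2 + 3 * y' ^ 2 := by
  by_cases h3 : y % 3 = 0
  · obtain ⟨s, rfl⟩ : ∃ s, x = y + 2 * s := ⟨(x - y) / 2, by omega⟩
    by_cases hs : s % 2 = 1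
    · exact ⟨2 * y + s, s, by omega, by omega, by omega, by omega, by ring⟩
    · exact ⟨s - y, y + s, by omega, by omega, by omega, by omega, by ring⟩
  · exact ⟨x, y, hx, hy, hx3, h3, rfl⟩

theorem sq_odd (x : ℤ) (h : x % 2 = 1) : x ^ 2 % 8 = 1 := by
  have h8 : x % 8 = 1 ∨ x % 8 = 3 ∨ x % 8 = 5 ∨ x % 8 = 7 := by omega
  rcases h8 with h8 | h8 | h8 | h8 <;> simp [pow_two, Int.mul_emod, h8]

theorem sq_even (r : ℤ) : (2 * r) ^ 2 % 8 = 4 * (r % 2) := by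
  rcases Int.even_or_odd' r with ⟨s, rfl | rfl⟩ <;> ring_nf <;> omega

theorem rep_odd (n : ℕ) : ∃ x y z : ℤ, x % 2 = 1 ∧ y % 2 = 1 ∧ z % 2 = 1 ∧
    24 * (n : ℤ) + 7 = x ^ 2 + 3 * y ^ 2 + 3 * z ^ 2 := by
  obtain ⟨x, y, z, h⟩ := rep_diag n
  have key : ∀ x : ℤ, (x % 2 = 1 ∧ x ^ 2 % 8 = 1) ∨
      ∃ r, x = 2 * r ∧ x ^ 2 % 8 = 4 * (r % 2) := by
    intro x
    by_cases hx : x % 2 = 1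
    · exact Or.inl ⟨hx, sq_odd x hx⟩
    · obtain ⟨r, rfl⟩ : ∃ r, x = 2 * r := ⟨x / 2, by omega⟩
      exact Or.inr ⟨r, rfl, sq_even r⟩
  rcases key x with ⟨hx, hx2⟩ | ⟨r, hx, hx2⟩ <;> rcases key y with ⟨hy, hy2⟩ | ⟨s, hy, hy2⟩ <;>
    rcases key z with ⟨hz, hz2⟩ | ⟨t, hz, hz2⟩ <;> try (exfalso; omega)
  · exact ⟨x, y, z, hx, hy, hz, h⟩
  · obtain ⟨x', z', h1, h2, h3⟩ := pair_odd r t (by omega)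
    subst hx hz
    exact ⟨x', y, z', h1, hy, h2, by linarith⟩
  · obtain ⟨x', y', h1, h2, h3⟩ := pair_odd r s (by omega)
    subst hx hy
    exact ⟨x', y', z, h1, h2, hz, by linarith⟩

theorem gcd_six (x : ℤ) (h2 : x % 2 = 1) (h3 : x % 3 ≠ 0) : Int.gcd x 6 = 1 := by
  rw [← Int.gcd_emod]
  have h6 : x % 6 = 1 ∨ x % 6 = 5 := by omega
  rcases h6 with h6 | h6 <;> rw [h6] <;> rfl

theorem rep_24n_add_seven (n : ℕ) :
    ∃ x y z : ℤ, Int.gcd x 6 = 1 ∧ Int.gcd y 6 = 1 ∧ Int.gcd z 6 = 1 ∧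
      24 * (n : ℤ) + 7 = x ^ 2 + 3 * y ^ 2 + 3 * z ^ 2 := by
  obtain ⟨x, y, z, hx, hy, hz, h⟩ := rep_odd n
  have hx3 : x % 3 ≠ 0 := by
    intro h0
    obtain ⟨s, rfl⟩ := Int.dvd_of_emod_eq_zero h0
    have : (3 * s) ^ 2 = 3 * (3 * s ^ 2) := by ring
    omega
  obtain ⟨x1, y1, a1, a2, a3, a4, a5⟩ := pair_fix x y hx hy hx3
  obtain ⟨x2, z1, b1, b2, b3, b4, b5⟩ := pair_fix x1 z a1 hz a3
  exact ⟨x2, y1, z1, gcd_six _ b1 b3, gcd_six _ a2 a4, gcd_six _ b2 b4, by linarith⟩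
end

section
/- For every nonnegative integer n, there exist odd integers a, b, c with c ≡ 2 (mod 5) or c ≡ −2 (mod 5), such that 120n + 77 = a² + b² + 3c². -/
/-- Descent on the norm form of discriminant `-15`. -/
theorem pair_aux (k : ℕ) : ∀ y t : ℤ, y.natAbs + t.natAbs ≤ k → (y ≠ 0 ∨ t ≠ 0) →
    y % 2 = t % 2 → ∃ y1 t1 : ℤ, y1 ^ 2 + 15 * t1 ^ 2 = y ^ 2 + 15 * t ^ 2 ∧
      ((y1 % 2 = 1 ∧ t1 % 2 = 1) ∨ ∃ e f : ℤ, y1 = 2 * e ∧ t1 = 2 * f ∧ (e + f) % 2 = 1) := by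
  induction k with
  | zero => intro y t h h0 _; omega
  | succ k ih =>
    intro y t hk h0 hp
    by_cases hodd : y % 2 = 1
    · exact ⟨y, t, rfl, Or.inl ⟨hodd, by omega⟩⟩
    obtain ⟨a, rfl⟩ : ∃ a, y = 2 * a := ⟨y / 2, by omega⟩
    obtain ⟨b, rfl⟩ : ∃ b, t = 2 * b := ⟨t / 2, by omega⟩
    by_cases hab : (a + b) % 2 = 1
    · exact ⟨2 * a, 2 * b, rfl, Or.inr ⟨a, b, rfl, rfl, hab⟩⟩
    obtain ⟨c, d, hcd, h⟩ := ih a b (by omega) (by omega) (by omega)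
    rcases h with ⟨hc, hd⟩ | ⟨e, f, rfl, rfl, hef⟩
    · obtain ⟨c', rfl⟩ : ∃ c', c = 2 * c' + 1 := ⟨c / 2, by omega⟩
      obtain ⟨d', rfl⟩ : ∃ d', d = 2 * d' + 1 := ⟨d / 2, by omega⟩
      by_cases hs : (c' + d') % 2 = 0
      · exact ⟨c' - 15 * d' - 7, c' + d' + 1, by linear_combination 4 * hcd,
          Or.inl ⟨by omega, by omega⟩⟩
      · exact ⟨c' + 15 * d' + 8, d' - c', by linear_combination 4 * hcd,
          Or.inl ⟨by omega, by omega⟩⟩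
    · exact ⟨e - 15 * f, e + f, by linear_combination 4 * hcd, Or.inl ⟨by omega, by omega⟩⟩

/-- `2 (y² + 15 t²)` rewritten as `5 u² + 3 c²` with `u`, `c` odd. -/
theorem pair_odd_s19 (y t : ℤ) (h0 : y ≠ 0 ∨ t ≠ 0) (hp : y % 2 = t % 2) :
    ∃ u c : ℤ, u % 2 = 1 ∧ c % 2 = 1 ∧ 5 * u ^ 2 + 3 * c ^ 2 = 2 * (y ^ 2 + 15 * t ^ 2) := by
  obtain ⟨y1, t1, h, h'⟩ := pair_aux _ y t le_rfl h0 hp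
  rw [← h]
  rcases h' with ⟨hc, hd⟩ | ⟨e, f, rfl, rfl, hef⟩
  · obtain ⟨c', rfl⟩ : ∃ c', y1 = 2 * c' + 1 := ⟨y1 / 2, by omega⟩
    obtain ⟨d', rfl⟩ : ∃ d', t1 = 2 * d' + 1 := ⟨t1 / 2, by omega⟩
    by_cases hs : (c' + d') % 2 = 0
    · exact ⟨c' - 3 * d' - 1, c' + 5 * d' + 3, by omega, by omega, by ring⟩
    · exact ⟨c' + 3 * d' + 2, c' - 5 * d' - 2, by omega, by omega, by ring⟩
  · exact ⟨e + 3 * f, e - 5 * f, by omega, by omega, by ring⟩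

theorem sq_mod5 (x : ℤ) : (x % 5 = 0 ∧ x ^ 2 % 5 = 0) ∨ ((x % 5 = 1 ∨ x % 5 = 4) ∧ x ^ 2 % 5 = 1) ∨
    ((x % 5 = 2 ∨ x % 5 = 3) ∧ x ^ 2 % 5 = 4) := by
  have : x % 5 = 0 ∨ x % 5 = 1 ∨ x % 5 = 2 ∨ x % 5 = 3 ∨ x % 5 = 4 := by omega
  rcases this with h | h | h | h | h <;> simp [pow_two, Int.mul_emod, h]

theorem sq_mod8 (x : ℤ) : (x % 4 = 0 ∧ x ^ 2 % 8 = 0) ∨ (x % 4 = 2 ∧ x ^ 2 % 8 = 4) ∨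
    (x % 2 = 1 ∧ x ^ 2 % 8 = 1) := by
  have : x % 8 = 0 ∨ x % 8 = 1 ∨ x % 8 = 2 ∨ x % 8 = 3 ∨ x % 8 = 4 ∨ x % 8 = 5 ∨ x % 8 = 6 ∨
    x % 8 = 7 := by omega
  rcases this with h | h | h | h | h | h | h | h <;> simp [pow_two, Int.mul_emod, h] <;> omega

/-- From the form `2 y² + 5 w² + 30 t²` to the wanted shape. -/
theorem from_B (N y w t : ℤ) (h8 : N % 8 = 5) (h5 : N % 5 = 2)
    (h : N = 2 * y ^ 2 + 5 * w ^ 2 + 30 * t ^ 2) :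
    ∃ a b c : ℤ, Odd a ∧ Odd b ∧ Odd c ∧ (c ≡ 2 [ZMOD 5] ∨ c ≡ -2 [ZMOD 5]) ∧
      N = a ^ 2 + b ^ 2 + 3 * c ^ 2 := by
  have hw : w % 2 = 1 ∧ w ^ 2 % 8 = 1 := by
    rcases sq_mod8 w with h1 | h1 | h1 <;> omega
  have hyt : (y ^ 2 + 15 * t ^ 2) % 4 = 0 := by omega
  have hp : y % 2 = t % 2 := by
    rcases sq_mod8 y with h1 | h1 | h1 <;> rcases sq_mod8 t with h2 | h2 | h2 <;> omega
  have hw := hw.1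
  have h0 : y ≠ 0 ∨ t ≠ 0 := by
    by_contra! hc
    obtain ⟨rfl, rfl⟩ := hc
    omega
  obtain ⟨u, c, hu, hc, huc⟩ := pair_odd_s19 y t h0 hp
  refine ⟨2 * u - w, u + 2 * w, c, Int.odd_iff.2 (by omega), Int.odd_iff.2 (by omega),
    Int.odd_iff.2 hc, ?_, by linear_combination h - huc⟩
  have hN : N = 5 * (w ^ 2 + u ^ 2) + 3 * c ^ 2 := by linear_combination h - huc
  have hc5 : c % 5 = 2 ∨ c % 5 = 3 := by
    clear h huc hyt hp
    rcases sq_mod5 c with h1 | h1 | h1 <;> omega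
  clear h huc hyt hp hN
  simp only [Int.ModEq]
  omega

/-- From `a² + b² + 3 c²`, all odd. -/
theorem from_odd (N a b c : ℤ) (h8 : N % 8 = 5) (h5 : N % 5 = 2) (ha : a % 2 = 1) (hb : b % 2 = 1)
    (hc : c % 2 = 1) (h : N = a ^ 2 + b ^ 2 + 3 * c ^ 2) :
    ∃ a b c : ℤ, Odd a ∧ Odd b ∧ Odd c ∧ (c ≡ 2 [ZMOD 5] ∨ c ≡ -2 [ZMOD 5]) ∧
      N = a ^ 2 + b ^ 2 + 3 * c ^ 2 := by
  by_cases hg : c % 5 = 2 ∨ c % 5 = 3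
  · refine ⟨a, b, c, Int.odd_iff.2 ha, Int.odd_iff.2 hb, Int.odd_iff.2 hc, ?_, h⟩
    simp only [Int.ModEq]
    omega
  obtain ⟨x, hx⟩ : ∃ x, a + b = 2 * x := ⟨(a + b) / 2, by omega⟩
  obtain ⟨y, hy⟩ : ∃ y, a - b = 2 * y := ⟨(a - b) / 2, by omega⟩
  obtain rfl : a = x + y := by omega
  obtain rfl : b = x - y := by omega
  have h2 : N = 2 * x ^ 2 + 2 * y ^ 2 + 3 * c ^ 2 := by rw [h]; ring
  have key : ∀ p q r : ℤ, N = 2 * p ^ 2 + 2 * q ^ 2 + 3 * r ^ 2 → (p - r) % 5 = 0 →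
      ∃ a b c : ℤ, Odd a ∧ Odd b ∧ Odd c ∧ (c ≡ 2 [ZMOD 5] ∨ c ≡ -2 [ZMOD 5]) ∧
      N = a ^ 2 + b ^ 2 + 3 * c ^ 2 := by
    intro p q r hN hpr
    obtain ⟨s, hs⟩ : ∃ s, p = r + 5 * s := ⟨(p - r) / 5, by omega⟩
    subst hs
    exact from_B N q (r + 2 * s) s h8 h5 (by rw [hN]; ring)
  have hcase : (x - c) % 5 = 0 ∨ (x - -c) % 5 = 0 ∨ (y - c) % 5 = 0 ∨ (y - -c) % 5 = 0 := by
    rcases sq_mod5 x with h3 | h3 | h3 <;> rcases sq_mod5 y with h4 | h4 | h4 <;>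
      rcases sq_mod5 c with h6 | h6 | h6 <;> omega
  rcases hcase with h' | h' | h' | h'
  · exact key x y c h2 h'
  · exact key x y (-c) (by rw [h2]; ring) h'
  · exact key y x c (by rw [h2]; ring) h'
  · exact key y x (-c) (by rw [h2]; ring) h'

/-- From any representation by `x² + y² + yz + z²`. -/
theorem from_hex (N x y z : ℤ) (h8 : N % 8 = 5) (h5 : N % 5 = 2)
    (h : N = x ^ 2 + (y ^ 2 + y * z + z ^ 2)) :
    ∃ a b c : ℤ, Odd a ∧ Odd b ∧ Odd c ∧ (c ≡ 2 [ZMOD 5] ∨ c ≡ -2 [ZMOD 5]) ∧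
      N = a ^ 2 + b ^ 2 + 3 * c ^ 2 := by
  have hpq : ∃ p r : ℤ, y ^ 2 + y * z + z ^ 2 = p ^ 2 + 3 * r ^ 2 := by
    by_cases hz : z % 2 = 0
    · obtain ⟨s, rfl⟩ : ∃ s, z = 2 * s := ⟨z / 2, by omega⟩
      exact ⟨y + s, s, by ring⟩
    by_cases hy : y % 2 = 0
    · obtain ⟨s, rfl⟩ : ∃ s, y = 2 * s := ⟨y / 2, by omega⟩
      exact ⟨z + s, s, by ring⟩
    obtain ⟨s, rfl⟩ : ∃ s, y = 2 * s + 1 := ⟨y / 2, by omega⟩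
    obtain ⟨t, rfl⟩ : ∃ s, z = 2 * s + 1 := ⟨z / 2, by omega⟩
    exact ⟨s - t, s + t + 1, by ring⟩
  obtain ⟨p, r, hpr⟩ := hpq
  rw [hpr] at h
  have key : ∀ x p r : ℤ, x % 2 = 1 → p % 2 = 0 → r % 2 = 0 → N = x ^ 2 + p ^ 2 + 3 * r ^ 2 →
      ∃ a b c : ℤ, Odd a ∧ Odd b ∧ Odd c ∧ (c ≡ 2 [ZMOD 5] ∨ c ≡ -2 [ZMOD 5]) ∧
      N = a ^ 2 + b ^ 2 + 3 * c ^ 2 := by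
    intro x p r hx hp hr hN
    have := sq_mod8 x; have := sq_mod8 p; have := sq_mod8 r
    obtain ⟨s, hs⟩ : ∃ s, p = 2 * s := ⟨p / 2, by omega⟩
    obtain ⟨t, ht⟩ : ∃ s, r = 2 * s := ⟨r / 2, by omega⟩
    exact from_odd N x (s + 3 * t) (s - t) h8 h5 hx (by omega) (by omega)
      (by rw [hN, hs, ht]; ring)
  have := sq_mod8 x; have := sq_mod8 p; have := sq_mod8 r
  by_cases hr : r % 2 = 1
  · exact from_odd N x p r h8 h5 (by omega) (by omega) hr (by rw [h]; ring)
  by_cases hx : x % 2 = 1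
  · exact key x p r hx (by omega) (by omega) (by rw [h]; ring)
  · exact key p x r (by omega) (by omega) (by omega) (by rw [h]; ring)

theorem nearest (x W : ℤ) (hW : 0 < W) : ∃ y : ℤ, 4 * (x - W * y) ^ 2 ≤ W ^ 2 := by
  have h1 := Int.emod_add_mul_ediv (2 * x + W) (2 * W)
  have h2 := Int.emod_nonneg (2 * x + W) (show 2 * W ≠ 0 by omega)
  have h3 := Int.emod_lt_of_pos (2 * x + W) (show 0 < 2 * W by omega)
  refine ⟨(2 * x + W) / (2 * W), ?_⟩
  set y := (2 * x + W) / (2 * W)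
  have e : 2 * (x - W * y) = (2 * x + W) % (2 * W) - W := by linarith
  have : (2 * (x - W * y)) ^ 2 ≤ W ^ 2 := by
    rw [e]; apply sq_le_sq'
    · linarith
    · linarith
  linarith [this, show (2 * (x - W * y)) ^ 2 = 4 * (x - W * y) ^ 2 by ring]

/-- Davenport–Cassels for `x² + y² + yz + z²`. -/
theorem dav_cas (N : ℤ) (k : ℕ) : ∀ W X Y Z : ℤ, 0 < W → W.toNat ≤ k →
    N * W ^ 2 = X ^ 2 + (Y ^ 2 + Y * Z + Z ^ 2) →
    ∃ x y z : ℤ, N = x ^ 2 + (y ^ 2 + y * z + z ^ 2) := by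
  induction k with
  | zero => intro W X Y Z hW hk; omega
  | succ k ih =>
    intro W X Y Z hW hk h
    obtain ⟨x, hx⟩ := nearest X W hW
    obtain ⟨z, hz⟩ := nearest Z W hW
    obtain ⟨y, hy⟩ := nearest (2 * Y + (Z - W * z)) (2 * W) (by omega)
    set A := X - W * x with hA
    set B := Y - W * y with hB
    set C := Z - W * z with hC
    have hy' : 4 * (2 * B + C) ^ 2 ≤ 4 * W ^ 2 := by
      have : 2 * Y + C - 2 * W * y = 2 * B + C := by rw [hB]; ring
      rw [this] at hy; linarith
    have hlt : A ^ 2 + (B ^ 2 + B * C + C ^ 2) < W ^ 2 := by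
      have : 0 < W ^ 2 := by positivity
      have e4 : 4 * (A ^ 2 + (B ^ 2 + B * C + C ^ 2)) = 4 * A ^ 2 + (2 * B + C) ^ 2 + 3 * C ^ 2 := by
        ring
      linarith
    set W' := N * W - (2 * X * x + 2 * Y * y + Y * z + Z * y + 2 * Z * z) +
      W * (x ^ 2 + (y ^ 2 + y * z + z ^ 2)) with hW'
    have e : W * W' = A ^ 2 + (B ^ 2 + B * C + C ^ 2) := by
      rw [hW', hA, hB, hC]; linear_combination h
    have hlt' : W' < W := by
      by_contra! hcon
      have := mul_le_mul_of_nonneg_left hcon hW.le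
      rw [← e, pow_two] at hlt
      linarith
    have hnn : 0 ≤ B ^ 2 + B * C + C ^ 2 := by nlinarith [sq_nonneg (2 * B + C), sq_nonneg C]
    have hge : 0 ≤ W' := by
      by_contra! hneg
      have := mul_neg_of_pos_of_neg hW hneg
      linarith [sq_nonneg A]
    rcases hge.eq_or_lt with h0 | hpos
    · rw [← h0, mul_zero] at e
      have hA0 : A = 0 := by
        have : A ^ 2 = 0 := by linarith [sq_nonneg A]
        exact pow_eq_zero_iff (two_ne_zero) |>.1 this
      have hC0 : C = 0 := by
        have : C ^ 2 = 0 := by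
          have e4 : 4 * A ^ 2 + (2 * B + C) ^ 2 + 3 * C ^ 2 = 0 := by linear_combination -4 * e
          linarith [sq_nonneg A, sq_nonneg (2 * B + C), sq_nonneg C]
        exact pow_eq_zero_iff (two_ne_zero) |>.1 this
      have hB0 : B = 0 := by
        rw [hA0, hC0] at e
        have : B ^ 2 = 0 := by linarith
        exact pow_eq_zero_iff (two_ne_zero) |>.1 this
      refine ⟨x, y, z, ?_⟩
      have hX : X = W * x := by linarith
      have hY : Y = W * y := by linarith
      have hZ : Z = W * z := by linarith
      have hW2 : W ^ 2 ≠ 0 := by positivity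
      apply mul_right_cancel₀ hW2
      rw [h, hX, hY, hZ]; ring
    · set g := x ^ 2 + (y ^ 2 + y * z + z ^ 2) - N with hg
      refine ih W' (W' * x + g * A) (W' * y + g * B) (W' * z + g * C) hpos (by omega) ?_
      have e2 : (W' * x + g * A) ^ 2 + ((W' * y + g * B) ^ 2 + (W' * y + g * B) * (W' * z + g * C) +
        (W' * z + g * C) ^ 2) = W' ^ 2 * (g + N) + W' * g * (2 * A * x + 2 * B * y + B * z + C * y +
          2 * C * z) + g ^ 2 * (W * W') := by rw [e, hg]; ring
      have e3 : 2 * A * x + 2 * B * y + B * z + C * y + 2 * C * z = - W' - W * g := by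
        rw [hW', hA, hB, hC, hg]; ring
      rw [e2, e3]; ring

theorem jac (N q : ℕ) (hN : N % 12 = 5) (hq : q % 12 = 5) (hqN : (q : ℤ) % N = (-3) % N) :
    jacobiSym (3 * N) q = 1 := by
  have hNo : Odd N := Nat.odd_iff.2 (by omega)
  have hqo : Odd q := Nat.odd_iff.2 (by omega)
  have h23 : jacobiSym 2 3 = -1 := by norm_num
  have a1 : jacobiSym (3 : ℕ) q = -1 := by
    rw [jacobiSym.quadratic_reciprocity_one_mod_four' (by decide) (by omega), jacobiSym.mod_left]
    rw [show ((q : ℤ) % ((3 : ℕ) : ℤ)) = 2 by omega]; exact h23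
  have a2 : jacobiSym (3 : ℕ) N = -1 := by
    rw [jacobiSym.quadratic_reciprocity_one_mod_four' (by decide) (by omega), jacobiSym.mod_left]
    rw [show ((N : ℤ) % ((3 : ℕ) : ℤ)) = 2 by omega]; exact h23
  have a3 : jacobiSym N q = -1 := by
    rw [jacobiSym.quadratic_reciprocity_one_mod_four (by omega) hqo, jacobiSym.mod_left' hqN,
      jacobiSym.neg _ hNo, ZMod.χ₄_nat_one_mod_four (by omega)]
    simpa using a2
  rw [jacobiSym.mul_left, a3]
  have : jacobiSym 3 q = -1 := by simpa using a1
  rw [this]; norm_num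

theorem pigeon (N q s : ℕ) (hN : 0 < N) (hq : 0 < q) :
    ∃ w z t : ℤ, (w ≠ 0 ∨ z ≠ 0 ∨ t ≠ 0) ∧ w ^ 2 ≤ 3 * q ∧ z ^ 2 ≤ q * N ∧ t ^ 2 ≤ 3 * N ∧
      (N : ℤ) ∣ t - z ∧ (3 : ℤ) ∣ w - t ∧ (q : ℤ) ∣ s * w - 3 * z := by
  have : NeZero N := ⟨hN.ne'⟩
  have : NeZero q := ⟨hq.ne'⟩
  set A := Nat.sqrt (3 * q)
  set B := Nat.sqrt (q * N)
  set C := Nat.sqrt (3 * N)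
  let S : Finset (ℕ × ℕ × ℕ) :=
    Finset.range (A + 1) ×ˢ (Finset.range (B + 1) ×ˢ Finset.range (C + 1))
  let f : ℕ × ℕ × ℕ → ZMod N × ZMod 3 × ZMod q := fun p =>
    ((p.2.2 : ZMod N) - (p.2.1 : ZMod N), (p.1 : ZMod 3) - (p.2.2 : ZMod 3),
      (s : ZMod q) * (p.1 : ZMod q) - 3 * (p.2.1 : ZMod q))
  have hcard : (Finset.univ : Finset (ZMod N × ZMod 3 × ZMod q)).card < S.card := by
    simp only [S, Finset.card_univ, Fintype.card_prod, ZMod.card, Finset.card_product,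
      Finset.card_range]
    have hA : 3 * q < (A + 1) * (A + 1) := Nat.lt_succ_sqrt _
    have hB : q * N < (B + 1) * (B + 1) := Nat.lt_succ_sqrt _
    have hC : 3 * N < (C + 1) * (C + 1) := Nat.lt_succ_sqrt _
    have h1 : (3 * q) * (q * N) < ((A + 1) * (A + 1)) * ((B + 1) * (B + 1)) :=
      Nat.mul_lt_mul_of_lt_of_lt hA hB
    have h2 := Nat.mul_lt_mul_of_lt_of_lt h1 hC
    apply lt_of_pow_lt_pow_left₀ 2 (Nat.zero_le _)
    calc (N * (3 * q)) ^ 2 = 3 * q * (q * N) * (3 * N) := by ring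
      _ < _ := h2
      _ = _ := by ring
  obtain ⟨p, hp, p', hp', hne, hf⟩ := Finset.exists_ne_map_eq_of_card_lt_of_maps_to hcard
    (f := f) (fun _ _ => Finset.mem_coe.2 (Finset.mem_univ _))
  obtain ⟨a, b, c⟩ := p
  obtain ⟨a', b', c'⟩ := p'
  simp only [S, Finset.mem_product, Finset.mem_range] at hp hp'
  simp only [f, Prod.mk.injEq] at hf
  obtain ⟨f1, f2, f3⟩ := hf
  have bd : ∀ (M m n : ℕ), m < Nat.sqrt M + 1 → n < Nat.sqrt M + 1 → ((m : ℤ) - n) ^ 2 ≤ M := by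
    intro M m n hm hn
    have h1 : ((m : ℤ) - n) ^ 2 ≤ (Nat.sqrt M : ℤ) ^ 2 := by
      apply sq_le_sq' <;> omega
    have h2 : ((Nat.sqrt M : ℤ)) ^ 2 ≤ M := by exact_mod_cast Nat.sqrt_le' M
    exact h1.trans h2
  refine ⟨a - a', b - b', c - c', ?_, ?_, ?_, ?_, ?_, ?_, ?_⟩
  · by_contra! hc
    apply hne
    simp only [Prod.mk.injEq]
    omega
  · exact_mod_cast bd (3 * q) a a' hp.1 hp'.1
  · exact_mod_cast bd (q * N) b b' hp.2.1 hp'.2.1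
  · exact_mod_cast bd (3 * N) c c' hp.2.2 hp'.2.2
  · rw [← ZMod.intCast_zmod_eq_zero_iff_dvd]; push_cast; linear_combination f1
  · rw [show (3 : ℤ) = ((3 : ℕ) : ℤ) by norm_num, ← ZMod.intCast_zmod_eq_zero_iff_dvd]
    push_cast; linear_combination f2
  · rw [← ZMod.intCast_zmod_eq_zero_iff_dvd]; push_cast; linear_combination f3

theorem rational_rep (N : ℕ) (hN : N % 12 = 5) :
    ∃ W X Y Z : ℤ, 0 < W ∧ N * W ^ 2 = X ^ 2 + Y ^ 2 + 3 * Z ^ 2 := by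
  have hunit : IsUnit ((4 * N - 3 : ℕ) : ZMod (12 * N)) := by
    rw [ZMod.isUnit_iff_coprime]
    apply Nat.Coprime.mul_right
    · show Nat.gcd (4 * N - 3) 12 = 1
      rw [Nat.gcd_comm, Nat.gcd_rec, show (4 * N - 3) % 12 = 5 by omega]
      decide
    · have h3 : Nat.Coprime 3 N := (Nat.Prime.coprime_iff_not_dvd Nat.prime_three).2 (by omega)
      have hd1 := Nat.gcd_dvd_left (4 * N - 3) N
      have hd2 := Nat.gcd_dvd_right (4 * N - 3) N
      have hd3 : Nat.gcd (4 * N - 3) N ∣ 3 := by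
        have := Nat.dvd_sub (hd2.mul_left 4) hd1
        rwa [show 4 * N - (4 * N - 3) = 3 by omega] at this
      exact Nat.eq_one_of_dvd_coprimes h3 hd3 hd2
  have : NeZero (12 * N) := ⟨by omega⟩
  obtain ⟨q, hqN, hqp, hqm⟩ := Nat.forall_exists_prime_gt_and_eq_mod hunit N
  have : Fact q.Prime := ⟨hqp⟩
  rw [ZMod.natCast_eq_natCast_iff] at hqm
  have hq12 : q % 12 = 5 := by
    have := hqm.of_mul_right N
    unfold Nat.ModEq at this
    omega
  have hqNd : (N : ℤ) ∣ q + 3 := by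
    have h1 := (hqm.of_mul_left 12)
    have h2 := (Nat.modEq_iff_dvd.1 h1)
    rw [Nat.cast_sub (by omega)] at h2
    push_cast at h2
    have : (q : ℤ) + 3 = 4 * N - (4 * N - 3 - q) := by ring
    rw [this]
    exact dvd_sub (Dvd.intro_left _ rfl) h2
  have hJ := jac N q hN hq12 (by
    apply Int.ModEq.symm
    apply Int.modEq_iff_dvd.2
    rwa [sub_neg_eq_add])
  have hsq := ZMod.isSquare_of_jacobiSym_eq_one hJ
  obtain ⟨s', hs'⟩ := hsq
  obtain ⟨s, rfl⟩ : ∃ s : ℕ, (s : ZMod q) = s' := ⟨s'.val, by simp⟩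
  have hs : (q : ℤ) ∣ s ^ 2 - 3 * N := by
    rw [← ZMod.intCast_zmod_eq_zero_iff_dvd]
    push_cast at hs' ⊢
    linear_combination -hs'
  obtain ⟨w, z, t, hne, hw, hz, ht, d1, d2, d3⟩ := pigeon N q s (by omega) hqp.pos
  obtain ⟨m, n, hmn⟩ := Nat.Prime.sq_add_sq (p := q) (by omega)
  have hmn' : (m : ℤ) ^ 2 + n ^ 2 = q := by exact_mod_cast hmn
  have hNpos : (0 : ℤ) < N := by omega
  have hqpos : (0 : ℤ) < q := by exact_mod_cast hqp.pos
  have hqprime : Prime (q : ℤ) := Nat.prime_iff_prime_int.1 hqp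
  have hqnN : ¬ q ∣ N := fun hd => by
    have := Nat.le_of_dvd (by omega) hd
    omega
  -- strictness of the bounds
  have hw' : w ^ 2 < 3 * q := by
    refine lt_of_le_of_ne hw fun he => ?_
    have h3 : (3 : ℤ) ∣ w := Int.prime_three.dvd_of_dvd_pow ⟨_, he⟩
    obtain ⟨v, rfl⟩ := h3
    have : (3 * v) ^ 2 = 9 * v ^ 2 := by ring
    omega
  have ht' : t ^ 2 < 3 * N := by
    refine lt_of_le_of_ne ht fun he => ?_
    have h3 : (3 : ℤ) ∣ t := Int.prime_three.dvd_of_dvd_pow ⟨_, he⟩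
    obtain ⟨v, rfl⟩ := h3
    have : (3 * v) ^ 2 = 9 * v ^ 2 := by ring
    omega
  have hz' : z ^ 2 < q * N := by
    refine lt_of_le_of_ne hz fun he => ?_
    have h3 : (q : ℤ) ∣ z := hqprime.dvd_of_dvd_pow ⟨_, he⟩
    obtain ⟨v, rfl⟩ := h3
    apply hqnN
    rw [← Int.natCast_dvd_natCast]
    refine ⟨v ^ 2, ?_⟩
    apply mul_left_cancel₀ hqpos.ne'
    rw [← he]; ring
  -- divisibility
  set F : ℤ := N * w ^ 2 - 3 * z ^ 2 - q * t ^ 2 with hF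
  have dN : (N : ℤ) ∣ F := by
    obtain ⟨a, ha⟩ := hqNd
    obtain ⟨b, hb⟩ := d1
    exact ⟨w ^ 2 + 3 * b * (t + z) - a * t ^ 2, by
      rw [hF]; linear_combination 3 * (t + z) * hb - t ^ 2 * ha⟩
  have d3' : (3 : ℤ) ∣ F := by
    obtain ⟨a, ha⟩ : ∃ a : ℤ, (N : ℤ) = 3 * a + 2 := ⟨(N : ℤ) / 3, by omega⟩
    obtain ⟨b, hb⟩ : ∃ a : ℤ, (q : ℤ) = 3 * a + 2 := ⟨(q : ℤ) / 3, by omega⟩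
    obtain ⟨c, hc⟩ := d2
    exact ⟨a * w ^ 2 - z ^ 2 - b * t ^ 2 + 2 * c * (w + t), by
      rw [hF, ha, hb]; linear_combination 2 * (w + t) * hc⟩
  have dq : (q : ℤ) ∣ F := by
    have h3F : (q : ℤ) ∣ 3 * F := by
      obtain ⟨a, ha⟩ := hs
      obtain ⟨b, hb⟩ := d3
      exact ⟨-a * w ^ 2 + b * (s * w + 3 * z) - 3 * t ^ 2, by
        rw [hF]; linear_combination (s * w + 3 * z) * hb - w ^ 2 * ha⟩
    rcases hqprime.dvd_or_dvd h3F with h | h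
    · exfalso
      have h' : q ∣ 3 := by exact_mod_cast h
      have := Nat.le_of_dvd (by norm_num) h'
      omega
    · exact h
  have c1 : IsCoprime (3 : ℤ) N := by
    have : IsCoprime ((3 : ℕ) : ℤ) N :=
      Nat.isCoprime_iff_coprime.2 ((Nat.Prime.coprime_iff_not_dvd Nat.prime_three).2 (by omega))
    simpa using this
  have c2 : IsCoprime (3 : ℤ) q := by
    have : IsCoprime ((3 : ℕ) : ℤ) q :=
      Nat.isCoprime_iff_coprime.2 ((Nat.Prime.coprime_iff_not_dvd Nat.prime_three).2 (by omega))
    simpa using this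
  have c3 : IsCoprime (q : ℤ) N :=
    Nat.isCoprime_iff_coprime.2 ((Nat.Prime.coprime_iff_not_dvd hqp).2 hqnN)
  have dall : (3 : ℤ) * (q * N) ∣ F :=
    (c2.mul_right c1).mul_dvd d3' (c3.mul_dvd dq dN)
  obtain ⟨k, hk⟩ := dall
  have hP : (0 : ℤ) < 3 * (q * N) := by positivity
  have b1 : N * w ^ 2 < 3 * ((q : ℤ) * N) := by
    have := mul_lt_mul_of_pos_left hw' hNpos
    linarith
  have b2 : (q : ℤ) * t ^ 2 < 3 * ((q : ℤ) * N) := by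
    have := mul_lt_mul_of_pos_left ht' hqpos
    linarith
  have n1 : 0 ≤ N * w ^ 2 := by positivity
  have n2 : 0 ≤ (q : ℤ) * t ^ 2 := by positivity
  have n3 := sq_nonneg z
  have k1 : k < 1 := by
    by_contra! hcon
    have := mul_le_mul_of_nonneg_left hcon hP.le
    linarith
  have k2 : -2 < k := by
    by_contra! hcon
    have := mul_le_mul_of_nonneg_left hcon hP.le
    linarith
  have hk01 : k = 0 ∨ k = -1 := by omega
  rcases hk01 with rfl | rfl
  · have hEq : N * w ^ 2 = 3 * z ^ 2 + q * t ^ 2 := by linarith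
    have hw0 : w ≠ 0 := by
      rintro rfl
      have hz0 : z ^ 2 = 0 := by
        have : (N : ℤ) * 0 ^ 2 = 0 := by ring
        linarith
      have ht0 : (q : ℤ) * t ^ 2 = 0 := by
        have : (N : ℤ) * 0 ^ 2 = 0 := by ring
        linarith
      have hz1 : z = 0 := pow_eq_zero_iff (two_ne_zero) |>.1 hz0
      have ht1 : t = 0 := by
        rcases mul_eq_zero.1 ht0 with h | h
        · omega
        · exact pow_eq_zero_iff (two_ne_zero) |>.1 h
      rcases hne with h | h | h
      · exact h rfl
      · exact h hz1
      · exact h ht1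
    refine ⟨|w|, m * t, n * t, z, abs_pos.2 hw0, ?_⟩
    rw [sq_abs]
    linear_combination hEq - t ^ 2 * hmn'
  · have hEq : N * (w ^ 2 + 3 * q) = 3 * z ^ 2 + q * t ^ 2 := by linarith
    refine ⟨w ^ 2 + 3 * q, m * (3 * z + t * w), n * (3 * z + t * w), z * w - q * t,
      by positivity, ?_⟩
    linear_combination (w ^ 2 + 3 * q) * hEq - (3 * z + t * w) ^ 2 * hmn'

theorem rep_120n_add_77_odd (n : ℕ) :
    ∃ a b c : ℤ, Odd a ∧ Odd b ∧ Odd c ∧ (c ≡ 2 [ZMOD 5] ∨ c ≡ -2 [ZMOD 5]) ∧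
      120 * (n : ℤ) + 77 = a ^ 2 + b ^ 2 + 3 * c ^ 2 := by
  obtain ⟨W, X, Y, Z, hW, h⟩ := rational_rep (120 * n + 77) (by omega)
  push_cast at h
  obtain ⟨x, y, z, hxyz⟩ := dav_cas (120 * (n : ℤ) + 77) _ W X (Y - Z) (2 * Z) hW le_rfl
    (by rw [h]; ring)
  exact from_hex _ x y z (by omega) (by omega) hxyz
end
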